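/- (Equivalence of the fractional upper-bound program and its pruned linear reformulation) Suppose R_Q ∩ R_W ≠ ∅ and the feasible set F = { q: R → ℝ_{≥0} : Σ_{r ∈ R_{v_B.v_A}} q_r = p_{v_B.v_A} for all (v_A, v_B), and Σ_{r ∈ R_W} q_r > 0 } is nonempty. Then sup over q ∈ F of the ratio (Σ_{r ∈ R_Q ∩ R_W} q_r)/(Σ_{r ∈ R_W} q_r) equals the optimal value of the pruned LP: max{ Σ_{h ∈ H} d_h^U q_h : Σ_{h ∈ H: h(v_A)=v_B} q_h = α·p_{v_B.v_A} for all (v_A, v_B), Σ_{h ∈ H: R_h ⊆ R_W} q_h = 1, α ≥ 0, q ≥ 0 }, where d_h^U = 1{R_h ∩ (R_Q ∩ R_W) ≠ ∅}. -/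

import Mathlib

open Classical

/-- A partitioned causal graph on binary variables `V_0, …, V_{n-1}`, listed in
topologically sorted order.  Indices `< a` form the index set `A` (context
variables, which have no parents and topologically precede the rest), indices
`≥ a` form the index set `B`.  `parents j` is the set of indices of `pa(V_j)`. -/
structure CausalGraph where
  n : ℕ
  a : ℕ
  a_le : a ≤ n
  parents : Fin n → Finset (Fin n)
  sorted : ∀ j i : Fin n, i ∈ parents j → i < j
  noParentsA : ∀ j : Fin n, j.val < a → parents j = ∅

namespace CausalGraph

variable (G : CausalGraph)

/-- Indices of the `A` (context) variables. -/
abbrev AIdx := {i : Fin G.n // i.val < G.a}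

/-- Indices of the `B` variables. -/
abbrev BIdx := {i : Fin G.n // G.a ≤ i.val}

/-- Assignments of binary values to the `A` variables (`{0,1}^{|A|}`). -/
abbrev AAssign := G.AIdx → Bool

/-- Assignments of binary values to the `B` variables (`{0,1}^{|B|}`). -/
abbrev BAssign := G.BIdx → Bool

/-- A family of candidate response functions, one for each node, each reading a
full assignment of all variables. -/
abbrev Resp := Fin G.n → ((Fin G.n → Bool) → Bool)

/-- A response family is admissible when each component depends only on the
values of the parents of the corresponding node.  This encodes membership in
`R = ∏_{j∈B} F_j`, where `F_j` is the set of ALL functions from values of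
`pa(V_j)` to `{0,1}`. -/
def IsResponse (r : G.Resp) : Prop :=
  ∀ j : Fin G.n, ∀ v w : Fin G.n → Bool, (∀ i ∈ G.parents j, v i = w i) → r j v = r j w

/-- The response-function set `R`. -/
def R : Set G.Resp := {r | G.IsResponse r}

/-- One step of evaluation: `A` variables read the context, `B` variables apply
their response functions to the current assignment. -/
def evalStep (r : G.Resp) (vA : G.AAssign) (v : Fin G.n → Bool) : Fin G.n → Bool :=
  fun j => if h : j.val < G.a then vA ⟨j, h⟩ else r j v

/-- Evaluation of all variables from the context `vA` and the response family
`r`, in topological order (realized by `n`-fold iteration of `evalStep`, which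
is exact since each parent index precedes its child's index). -/
def eval (r : G.Resp) (vA : G.AAssign) : Fin G.n → Bool :=
  (G.evalStep r vA)^[G.n] (fun _ => false)

/-- `F_B(v_A, r)`: the values of the `B` variables determined by `v_A` and `r`. -/
def FB (r : G.Resp) (vA : G.AAssign) : G.BAssign := fun j => G.eval r vA j.1

/-- A hyperarc `h : {0,1}^{|A|} → {0,1}^{|B|}`. -/
abbrev Hyperarc := G.AAssign → G.BAssign

/-- `R_h`: the admissible responses consistent with hyperarc `h` on every input. -/
def Rh (h : G.Hyperarc) : Set G.Resp :=
  {r ∈ G.R | ∀ vA : G.AAssign, G.FB r vA = h vA}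

/-- A hyperarc is valid when `R_h ≠ ∅`. -/
def Valid (h : G.Hyperarc) : Prop := (G.Rh h).Nonempty

/-- The set `H` of valid hyperarcs. -/
def H : Set G.Hyperarc := {h | G.Valid h}

/-- `R_{v_B.v_A}`: responses mapping the context `v_A` to the values `v_B` of `V_B`. -/
def RvBvA (vA : G.AAssign) (vB : G.BAssign) : Set G.Resp :=
  {r ∈ G.R | G.FB r vA = vB}

/-- Restriction of a full assignment to the `A` variables. -/
def restrictA (v : Fin G.n → Bool) : G.AAssign := fun i => v i.1

/-- Restriction of a full assignment to the `B` variables. -/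
def restrictB (v : Fin G.n → Bool) : G.BAssign := fun j => v j.1

/-- The full assignment determined by a context `vA` and a hyperarc `h`. -/
def extendA (h : G.Hyperarc) (vA : G.AAssign) : Fin G.n → Bool :=
  fun i => if hi : i.val < G.a then vA ⟨i, hi⟩ else h vA ⟨i, not_lt.mp hi⟩

/-- One step of evaluation under the intervention `do(V_I = q_I)`: the
mechanisms of the intervened variables are ignored. -/
def evalDoStep (I : Finset (Fin G.n)) (qI : Fin G.n → Bool) (r : G.Resp)
    (qA : G.AAssign) (v : Fin G.n → Bool) : Fin G.n → Bool :=
  fun j => if h : j.val < G.a then qA ⟨j, h⟩ else if j ∈ I then qI j else r j v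

/-- Evaluation of all variables under the intervention `do(V_I = q_I)`,
in context `V_A = q_A`, using the response family `r`. -/
def evalDo (I : Finset (Fin G.n)) (qI : Fin G.n → Bool) (r : G.Resp)
    (qA : G.AAssign) : Fin G.n → Bool :=
  (G.evalDoStep I qI r qA)^[G.n] (fun _ => false)

/-- A causal query `P(V_O(V_I = q_I) = q_O | V_A = q_A)`: disjoint sets
`O, I ⊆ B` together with the values `q_A`, `q_I`, `q_O`. -/
structure Query (G : CausalGraph) where
  O : Finset (Fin G.n)
  I : Finset (Fin G.n)
  O_sub : ∀ j ∈ O, G.a ≤ j.val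
  I_sub : ∀ j ∈ I, G.a ≤ j.val
  disjOI : Disjoint O I
  qA : G.AAssign
  qI : Fin G.n → Bool
  qO : Fin G.n → Bool

/-- `R_Q`: the admissible responses consistent with the query, i.e. those with
`F_O((q_A, q_I), r) = q_O`. -/
def RQ (Q : G.Query) : Set G.Resp :=
  {r ∈ G.R | ∀ j ∈ Q.O, G.evalDo Q.I Q.qI r Q.qA j = Q.qO j}

/-- Edges of the mutilated graph `G^{do(V_I = q_I)}` (all edges into `V_I` deleted). -/
def doEdge (I : Finset (Fin G.n)) (i j : Fin G.n) : Prop := j ∉ I ∧ i ∈ G.parents j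

/-- `C(Q)`: the critical variables for the query, i.e. those with a directed
path to some variable of `V_O` in the mutilated graph `G^{do(V_I = q_I)}`. -/
def critical (Q : G.Query) : Set (Fin G.n) :=
  {i | ∃ o ∈ Q.O, Relation.ReflTransGen (G.doEdge Q.I) i o}

/-- An observation `{V_W = q_W}` with `W ⊆ B`, in context `V_A = q_A`. -/
structure Obs (G : CausalGraph) where
  W : Finset (Fin G.n)
  W_sub : ∀ j ∈ W, G.a ≤ j.val
  qA : G.AAssign
  qW : Fin G.n → Bool

/-- `R_W`: the admissible responses consistent with the observation, i.e. those
with `F_W(q_A, r) = q_W`. -/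
def RW (Ob : G.Obs) : Set G.Resp :=
  {r ∈ G.R | ∀ j ∈ Ob.W, G.eval r Ob.qA j = Ob.qW j}

/-- Edges of the causal graph `G` itself. -/
def edge (i j : Fin G.n) : Prop := i ∈ G.parents j

/-- `C(W)`: the critical variables for the observation: the `A`-variables with
a directed path in `G` to some variable of `V_W`. -/
def criticalW (Ob : G.Obs) : Set (Fin G.n) :=
  {i | i.val < G.a ∧ ∃ w ∈ Ob.W, Relation.ReflTransGen G.edge i w}

end CausalGraph

open CausalGraph

/-- The sum `Σ_{x ∈ s} f x` of `f` over a subset `s` of a finite type. -/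
noncomputable def setSum {α : Type*} [Fintype α] (s : Set α) (f : α → ℝ) : ℝ :=
  ∑ x : α, if x ∈ s then f x else 0

/-!
The Charnes–Cooper rescaling `q ↦ (q / q(R_W), 1 / q(R_W))` turns the fractional program into a
linear program on response functions, normalized to give the evidence mass one. The constraints of
this linear program only see the hyperarc `F_B(·, r)` of a response `r`, so its solutions can be
pushed forward to hyperarcs. Conversely, a solution on hyperarcs is pulled back by concentrating the
weight of each hyperarc on a single response; choosing that response inside the target event
whenever this is possible is optimal, which is what the coefficients `d_h^U` record.
-/

theorem exists_selection_mem_of_inter_nonempty {ι Ω : Type*} [Nonempty Ω] (F : ι → Set Ω)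
    (S : Set Ω) :
    ∃ rep : ι → Ω, ∀ i, (F i).Nonempty →
      rep i ∈ F i ∧ (rep i ∈ S ↔ (F i ∩ S).Nonempty) := by
  have selection_at (i : ι) : ∃ x, (F i).Nonempty → x ∈ F i ∧ (x ∈ S ↔ (F i ∩ S).Nonempty) := by
    by_cases hS : (F i ∩ S).Nonempty
    · obtain ⟨x, hxF, hxS⟩ := id hS
      exact ⟨x, fun _ ↦ ⟨hxF, iff_of_true hxS hS⟩⟩
    · by_cases hF : (F i).Nonempty
      · obtain ⟨x, hxF⟩ := id hF
        exact ⟨x, fun _ ↦ ⟨hxF, iff_of_false (fun hxS ↦ hS ⟨x, hxF, hxS⟩) hS⟩⟩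
      · exact ⟨Classical.arbitrary Ω, fun h ↦ absurd h hF⟩
  choose rep hrep using selection_at
  exact ⟨rep, hrep⟩

section SetSum

variable {α β : Type*} [Fintype α]

theorem setSum_eq_sum_filter (s : Set α) (f : α → ℝ) : setSum s f = ∑ x with x ∈ s, f x :=
  (Finset.sum_filter _ _).symm

theorem setSum_nonneg (s : Set α) {f : α → ℝ} (hf : ∀ x, 0 ≤ f x) : 0 ≤ setSum s f := by
  rw [setSum_eq_sum_filter]
  exact Finset.sum_nonneg fun x _ ↦ hf x

theorem setSum_mono_set {s t : Set α} {f : α → ℝ} (hf : ∀ x, 0 ≤ f x) (hst : s ⊆ t) :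
    setSum s f ≤ setSum t f := by
  rw [setSum_eq_sum_filter, setSum_eq_sum_filter]
  exact Finset.sum_le_sum_of_subset_of_nonneg (Finset.monotone_filter_right _ fun _ _ hx ↦ hst hx)
    fun x _ _ ↦ hf x

theorem setSum_smul (s : Set α) (c : ℝ) (f : α → ℝ) : setSum s (c • f) = c * setSum s f := by
  simp only [setSum_eq_sum_filter, Finset.mul_sum, Pi.smul_apply, smul_eq_mul]

/-- The pushforward along `f` of the weight `q` restricted to `s`: the weight of `b` is the total
weight of the fiber of `f` over `b` within `s`. -/
noncomputable def fiberSum (s : Set α) (f : α → β) (q : α → ℝ) (b : β) : ℝ :=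
  setSum {a ∈ s | f a = b} q

theorem fiberSum_nonneg (s : Set α) (f : α → β) {q : α → ℝ} (hq : ∀ a, 0 ≤ q a) (b : β) :
    0 ≤ fiberSum s f q b :=
  setSum_nonneg _ hq

theorem setSum_fiberSum [Fintype β] (t : Set β) (s : Set α) (f : α → β) (q : α → ℝ) :
    setSum t (fiberSum s f q) = setSum {a ∈ s | f a ∈ t} q := by
  simp only [fiberSum, setSum_eq_sum_filter]
  rw [Finset.sum_comm' (t' := {a | a ∈ s ∧ f a ∈ t}) (s' := fun a ↦ {f a})]
  · simp only [Finset.sum_singleton, Set.mem_ofPred_eq]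
  · intro b a
    simp only [Finset.mem_filter_univ, Finset.mem_singleton, Set.mem_ofPred_eq]
    grind

theorem sum_fiberSum [Fintype β] (s : Set α) (f : α → β) (q : α → ℝ) :
    ∑ b, fiberSum s f q b = setSum s q := by
  simpa [setSum] using setSum_fiberSum Set.univ s f q

end SetSum

namespace CausalGraph

variable {G : CausalGraph}

theorem mem_Rh_FB {r : G.Resp} (hr : r ∈ G.R) : r ∈ G.Rh (G.FB r) := ⟨hr, fun _ ↦ rfl⟩

theorem FB_mem_H {r : G.Resp} (hr : r ∈ G.R) : G.FB r ∈ G.H := ⟨r, mem_Rh_FB hr⟩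

theorem FB_eq_of_mem_Rh {h : G.Hyperarc} {r : G.Resp} (hr : r ∈ G.Rh h) : G.FB r = h :=
  funext hr.2

theorem sum_setSum_RvBvA (vA : G.AAssign) (q : G.Resp → ℝ) :
    ∑ vB, setSum (G.RvBvA vA vB) q = setSum G.R q :=
  sum_fiberSum G.R (fun r ↦ G.FB r vA) q

/-- An event on responses is observable when it consists of admissible responses and depends on a
response `r` only through the hyperarc `F_B(·, r)` it induces. -/
def IsObservable (E : Set G.Resp) : Prop := ∃ K : Set G.Hyperarc, E = {r ∈ G.R | G.FB r ∈ K}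

theorem isObservable_RW (Ob : G.Obs) : IsObservable (G.RW Ob) :=
  ⟨{h | ∀ j (hj : j ∈ Ob.W), h Ob.qA ⟨j, Ob.W_sub j hj⟩ = Ob.qW j}, rfl⟩

theorem IsObservable.subset_R {E : Set G.Resp} (hE : IsObservable E) : E ⊆ G.R := by
  obtain ⟨K, rfl⟩ := hE
  exact Set.sep_subset _ _

theorem IsObservable.Rh_subset_iff {E : Set G.Resp} (hE : IsObservable E) {h : G.Hyperarc}
    {r : G.Resp} (hr : r ∈ G.Rh h) : G.Rh h ⊆ E ↔ r ∈ E := by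
  obtain ⟨K, rfl⟩ := hE
  refine ⟨fun hsub ↦ hsub hr, fun hrK s hs ↦ ⟨hs.1, ?_⟩⟩
  rw [FB_eq_of_mem_Rh hs, ← FB_eq_of_mem_Rh hr]
  exact hrK.2

variable (G) in
/-- The values of the fractional program: the conditional probabilities of `T` given the evidence
`E`, under all weights on responses that reproduce the data `p` and give `E` positive mass. -/
def fractionalValues (p : G.AAssign → G.BAssign → ℝ) (E T : Set G.Resp) : Set ℝ :=
  {y | ∃ q : G.Resp → ℝ, (∀ r, 0 ≤ q r) ∧
    (∀ vA vB, setSum (G.RvBvA vA vB) q = p vA vB) ∧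
    0 < setSum E q ∧
    y = setSum (T ∩ E) q / setSum E q}

variable (G) in
/-- The values of the Charnes–Cooper linearization of the fractional program, in which `α` is the
reciprocal of the mass of the evidence `E`. -/
def charnesCooperValues (p : G.AAssign → G.BAssign → ℝ) (E T : Set G.Resp) : Set ℝ :=
  {y | ∃ (q : G.Resp → ℝ) (α : ℝ), 0 ≤ α ∧ (∀ r, 0 ≤ q r) ∧
    (∀ vA vB, setSum (G.RvBvA vA vB) q = α * p vA vB) ∧
    setSum E q = 1 ∧
    y = setSum (T ∩ E) q}

variable (G) in
/-- The values of the pruned linear program, whose variables are indexed by hyperarcs instead of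
responses. -/
def prunedValues (p : G.AAssign → G.BAssign → ℝ) (E T : Set G.Resp) : Set ℝ :=
  {y | ∃ (qh : G.Hyperarc → ℝ) (α : ℝ), 0 ≤ α ∧ (∀ h, 0 ≤ qh h) ∧
    (∀ vA vB, setSum {h ∈ G.H | h vA = vB} qh = α * p vA vB) ∧
    setSum {h ∈ G.H | G.Rh h ⊆ E} qh = 1 ∧
    y = setSum {h ∈ G.H | (G.Rh h ∩ (T ∩ E)).Nonempty} qh}

variable {p : G.AAssign → G.BAssign → ℝ} {E : Set G.Resp}

theorem bddAbove_fractionalValues (T : Set G.Resp) : BddAbove (G.fractionalValues p E T) := by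
  refine ⟨1, ?_⟩
  rintro y ⟨q, hq, -, hpos, rfl⟩
  exact div_le_one_of_le₀ (setSum_mono_set hq Set.inter_subset_right) hpos.le

theorem fractionalValues_subset_charnesCooperValues (T : Set G.Resp) :
    G.fractionalValues p E T ⊆ G.charnesCooperValues p E T := by
  rintro y ⟨q, hq, hmarginal, hpos, rfl⟩
  have hinv : 0 ≤ (setSum E q)⁻¹ := inv_nonneg.2 hpos.le
  refine ⟨(setSum E q)⁻¹ • q, (setSum E q)⁻¹, hinv, fun r ↦ mul_nonneg hinv (hq r),
    fun vA vB ↦ ?_, ?_, ?_⟩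
  · rw [setSum_smul, hmarginal]
  · rw [setSum_smul, inv_mul_cancel₀ hpos.ne']
  · rw [setSum_smul, div_eq_inv_mul]

theorem scale_pos_of_setSum_pos {q : G.Resp → ℝ} {α : ℝ} (hα : 0 ≤ α) (hq : ∀ r, 0 ≤ q r)
    (hmarginal : ∀ vA vB, setSum (G.RvBvA vA vB) q = α * p vA vB) (hE : E ⊆ G.R)
    (hpos : 0 < setSum E q) : 0 < α := by
  have vA : G.AAssign := Classical.arbitrary _
  refine hα.lt_of_ne' fun hzero ↦ (hpos.trans_le (setSum_mono_set hq hE)).ne' ?_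
  simp only [← sum_setSum_RvBvA vA q, hmarginal, hzero, zero_mul, Finset.sum_const_zero]

theorem charnesCooperValues_subset_fractionalValues (hE : E ⊆ G.R) (T : Set G.Resp) :
    G.charnesCooperValues p E T ⊆ G.fractionalValues p E T := by
  rintro y ⟨q, α, hα, hq, hmarginal, hone, rfl⟩
  have hαpos : 0 < α := scale_pos_of_setSum_pos hα hq hmarginal hE (hone ▸ one_pos)
  refine ⟨α⁻¹ • q, fun r ↦ mul_nonneg (inv_nonneg.2 hα) (hq r), fun vA vB ↦ ?_, ?_, ?_⟩
  · rw [setSum_smul, hmarginal, inv_mul_cancel_left₀ hαpos.ne']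
  · rw [setSum_smul, hone, mul_one]
    exact inv_pos.2 hαpos
  · rw [setSum_smul, setSum_smul, hone, mul_one, mul_div_cancel_left₀ _ (inv_pos.2 hαpos).ne']

theorem isCofinalFor_prunedValues (hE : IsObservable E) (T : Set G.Resp) :
    IsCofinalFor (G.charnesCooperValues p E T) (G.prunedValues p E T) := by
  rintro y ⟨q, α, hα, hq, hmarginal, hone, rfl⟩
  refine ⟨_, ⟨fiberSum G.R G.FB q, α, hα, fiberSum_nonneg _ _ hq, fun vA vB ↦ ?_, ?_, rfl⟩, ?_⟩
  · have hcell : {r ∈ G.R | G.FB r ∈ {h ∈ G.H | h vA = vB}} = G.RvBvA vA vB :=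
      Set.ext fun r ↦ and_congr_right fun hr ↦ and_iff_right (FB_mem_H hr)
    rw [setSum_fiberSum, hcell, hmarginal]
  · have hevidence : {r ∈ G.R | G.FB r ∈ {h ∈ G.H | G.Rh h ⊆ E}} = E := by
      ext r
      refine ⟨fun ⟨hrR, _, hsub⟩ ↦ hsub (mem_Rh_FB hrR), fun hr ↦ ?_⟩
      have hrR := hE.subset_R hr
      exact ⟨hrR, FB_mem_H hrR, (hE.Rh_subset_iff (mem_Rh_FB hrR)).2 hr⟩
    rw [setSum_fiberSum, hevidence, hone]
  · rw [setSum_fiberSum]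
    refine setSum_mono_set hq fun r hr ↦ ?_
    have hrR := hE.subset_R hr.2
    exact ⟨hrR, FB_mem_H hrR, r, mem_Rh_FB hrR, hr⟩

theorem prunedValues_subset_charnesCooperValues (hE : IsObservable E) (T : Set G.Resp) :
    G.prunedValues p E T ⊆ G.charnesCooperValues p E T := by
  rintro y ⟨qh, α, hα, hqh, hmarginal, hone, rfl⟩
  obtain ⟨rep, hrep⟩ := exists_selection_mem_of_inter_nonempty G.Rh (T ∩ E)
  refine ⟨fiberSum G.H rep qh, α, hα, fiberSum_nonneg _ _ hqh, fun vA vB ↦ ?_, ?_, ?_⟩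
  · have hcell : {h ∈ G.H | rep h ∈ G.RvBvA vA vB} = {h ∈ G.H | h vA = vB} := by
      refine Set.ext fun h ↦ and_congr_right fun hh ↦ ?_
      have hmem := (hrep h hh).1
      rw [RvBvA, Set.mem_sep_iff, FB_eq_of_mem_Rh hmem, and_iff_right hmem.1]
    rw [setSum_fiberSum, hcell, hmarginal]
  · have hevidence : {h ∈ G.H | rep h ∈ E} = {h ∈ G.H | G.Rh h ⊆ E} :=
      Set.ext fun h ↦ and_congr_right fun hh ↦ (hE.Rh_subset_iff (hrep h hh).1).symm
    rw [setSum_fiberSum, hevidence, hone]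
  · have htarget : {h ∈ G.H | rep h ∈ T ∩ E} = {h ∈ G.H | (G.Rh h ∩ (T ∩ E)).Nonempty} :=
      Set.ext fun h ↦ and_congr_right fun hh ↦ (hrep h hh).2
    rw [setSum_fiberSum, htarget]

end CausalGraph

theorem fractional_upper_equiv_general {G : CausalGraph} {p : G.AAssign → G.BAssign → ℝ}
    {E T : Set G.Resp} (hE : IsObservable E) (hne : (G.fractionalValues p E T).Nonempty) :
    IsLUB (G.prunedValues p E T) (sSup (G.fractionalValues p E T)) := by
  have hsub : G.prunedValues p E T ⊆ G.fractionalValues p E T :=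
    (prunedValues_subset_charnesCooperValues hE T).trans
      (charnesCooperValues_subset_fractionalValues hE.subset_R T)
  have hcofinal : IsCofinalFor (G.fractionalValues p E T) (G.prunedValues p E T) :=
    (isCofinalFor_prunedValues hE T).mono_left (fractionalValues_subset_charnesCooperValues T)
  exact (isLUB_csSup hne (bddAbove_fractionalValues T)).of_isCofinalFor hsub hcofinal

/-- Equivalence of the fractional upper-bound program and its
pruned linear reformulation: if `R_Q ∩ R_W ≠ ∅` and the feasible set `F` is
nonempty, then the supremum over `q ∈ F` of
`(Σ_{r∈R_Q∩R_W} q_r)/(Σ_{r∈R_W} q_r)` equals the optimal value of the pruned LP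
with objective coefficients `d_h^U = 1{R_h ∩ (R_Q ∩ R_W) ≠ ∅}`. -/
theorem fractional_upper_equiv (G : CausalGraph) (Q : G.Query) (Ob : G.Obs)
    (hqA : Ob.qA = Q.qA)
    (hQW : (G.RQ Q ∩ G.RW Ob).Nonempty)
    (p : G.AAssign → G.BAssign → ℝ)
    (hp : ∀ (vA : G.AAssign) (vB : G.BAssign), 0 ≤ p vA vB)
    (hp1 : ∀ vA : G.AAssign, ∑ vB : G.BAssign, p vA vB = 1)
    (hfeas : ∃ q : G.Resp → ℝ, (∀ r, 0 ≤ q r) ∧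
      (∀ (vA : G.AAssign) (vB : G.BAssign), setSum (G.RvBvA vA vB) q = p vA vB) ∧
      0 < setSum (G.RW Ob) q) :
    sSup {y : ℝ | ∃ q : G.Resp → ℝ, (∀ r, 0 ≤ q r) ∧
        (∀ (vA : G.AAssign) (vB : G.BAssign), setSum (G.RvBvA vA vB) q = p vA vB) ∧
        0 < setSum (G.RW Ob) q ∧
        y = setSum (G.RQ Q ∩ G.RW Ob) q / setSum (G.RW Ob) q} =
    sSup {y : ℝ | ∃ (qh : G.Hyperarc → ℝ) (α : ℝ), 0 ≤ α ∧ (∀ h, 0 ≤ qh h) ∧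
        (∀ (vA : G.AAssign) (vB : G.BAssign),
          setSum {h ∈ G.H | h vA = vB} qh = α * p vA vB) ∧
        setSum {h ∈ G.H | G.Rh h ⊆ G.RW Ob} qh = 1 ∧
        y = setSum {h ∈ G.H | (G.Rh h ∩ (G.RQ Q ∩ G.RW Ob)).Nonempty} qh} := by
  obtain ⟨q, hq, hmarginal, hpos⟩ := hfeas
  have hlub := fractional_upper_equiv_general (isObservable_RW Ob) (T := G.RQ Q)
    ⟨_, q, hq, hmarginal, hpos, rfl⟩
  exact (hlub.csSup_eq hlub.nonempty).symm
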